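/- Let p > 0 and a, b ∈ ℝ, and let J(a,b;−x) = ∫₀^1 t^a (1−t)^b e^{−xt} exp(−p/(t(1−t))) dt. Then, as x → +∞, J(a,b;−x) ~ √π · p^{a/2 + 1/4} · x^{−a/2 − 3/4} · exp(−p − 2√(px)); equivalently, J(a,b;−x) ~ 2 e^{−p} (p/x)^{(a+1)/2} K_{a+1}(2√(px)), where K_μ(w) = ∫₀^∞ e^{−w cosh u} cosh(μ u) du. That is, the quotient of J(a,b;−x) by either displayed expression tends to 1 as x → +∞. -/

import Mathlib

open MeasureTheory Set Filter

/-- The modified Bessel function of the second kind, for `w > 0` and real order `μ`: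
`K_μ(w) = ∫₀^∞ e^{-w cosh u} cosh(μ u) du`. -/
noncomputable def besselK (μ w : ℝ) : ℝ :=
  ∫ u in Ioi (0 : ℝ), Real.exp (-w * Real.cosh u) * Real.cosh (μ * u)

lemma cosh_sub_one_eq (y : ℝ) : Real.cosh y - 1 = 2 * Real.sinh (y / 2) ^ 2 := by
  have h := Real.cosh_two_mul (y / 2)
  have h2 := Real.cosh_sq (y / 2)
  rw [show 2 * (y / 2) = y by ring] at h
  linarith

lemma sq_le_sinh_sq (z : ℝ) : z ^ 2 ≤ Real.sinh z ^ 2 := by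
  rcases le_total 0 z with h | h
  · exact pow_le_pow_left₀ h (Real.self_le_sinh_iff.2 h) 2
  · have := Real.sinh_le_self_iff.2 h
    nlinarith

lemma phase_lower {c : ℝ} (hc : 0 < c) (v : ℝ) :
    v ^ 2 / 2 ≤ c ^ 2 * (Real.cosh (v / c) - 1) := by
  rw [cosh_sub_one_eq]
  have h := sq_le_sinh_sq (v / c / 2)
  have h2 : c ^ 2 * (2 * (v / c / 2) ^ 2) = v ^ 2 / 2 := by field_simp
  rw [← h2]
  gcongr

lemma phase_tendsto {c : ℝ → ℝ} (hc : Tendsto c atTop atTop) (v : ℝ) :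
    Tendsto (fun x => (c x) ^ 2 * (Real.cosh (v / c x) - 1)) atTop (nhds (v ^ 2 / 2)) := by
  have hd : HasDerivAt (fun h : ℝ => Real.sinh (h * (v / 2))) (v / 2) 0 := by
    have := ((hasDerivAt_id (0 : ℝ)).mul_const (v / 2)).sinh
    simpa using this
  have h1 := hasDerivAt_iff_tendsto_slope_zero.1 hd
  have h2 : Tendsto (fun x => (c x)⁻¹) atTop (nhdsWithin 0 {0}ᶜ) := by
    refine (tendsto_inv_atTop_nhdsGT_zero.comp hc).mono_right (nhdsWithin_mono _ ?_)
    intro y hy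
    exact ne_of_gt hy
  have h3 := ((h1.comp h2).pow 2).const_mul 2
  refine (h3.congr ?_).trans (by rw [show 2 * (v / 2) ^ 2 = v ^ 2 / 2 by ring])
  intro x
  rw [cosh_sub_one_eq]
  simp only [Function.comp, smul_eq_mul, inv_inv, zero_add, zero_mul, Real.sinh_zero, sub_zero]
  rw [show v / c x / 2 = (c x)⁻¹ * (v / 2) by ring]
  ring

lemma laplace_lemma {c : ℝ → ℝ} (hc : Tendsto c atTop atTop) (F : ℝ → ℝ → ℝ) (C m L : ℝ)
    (hC : 0 ≤ C)
    (hmeas : ∀ x, Measurable (F x))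
    (hbd : ∀ᶠ x in atTop, ∀ v, |F x v| ≤ C * Real.exp (m * |v|))
    (hlim : ∀ v, Tendsto (fun x => F x v) atTop (nhds L)) :
    Tendsto (fun x => ∫ v : ℝ, Real.exp (-((c x) ^ 2 * (Real.cosh (v / c x) - 1))) * F x v)
      atTop (nhds (Real.sqrt (2 * Real.pi) * L)) := by
  have hval : ∫ v : ℝ, Real.exp (-(v ^ 2 / 2)) * L = Real.sqrt (2 * Real.pi) * L := by
    rw [integral_mul_const]
    have := integral_gaussian (1 / 2)
    rw [show Real.pi / (1 / 2) = 2 * Real.pi by ring] at this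
    rw [← this]
    congr 2
    ext v
    congr 1
    ring
  rw [← hval]
  refine tendsto_integral_filter_of_dominated_convergence
    (fun v => C * Real.exp (m ^ 2) * Real.exp (-(1 / 4) * v ^ 2)) ?_ ?_ ?_ ?_
  · refine Eventually.of_forall fun x => Measurable.aestronglyMeasurable ?_
    have := hmeas x
    have hcosh : Measurable fun v : ℝ => Real.cosh (v / c x) :=
      Real.measurable_cosh.comp (measurable_id.div_const _)
    fun_prop
  · filter_upwards [hbd, hc.eventually_gt_atTop 0] with x hx hcx
    refine Eventually.of_forall fun v => ?_
    rw [norm_mul, Real.norm_eq_abs, Real.norm_eq_abs, Real.abs_exp]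
    calc Real.exp (-((c x) ^ 2 * (Real.cosh (v / c x) - 1))) * |F x v|
        ≤ Real.exp (-(v ^ 2 / 2)) * (C * Real.exp (m * |v|)) := by
          gcongr
          · exact phase_lower hcx v
          · exact hx v
      _ = C * Real.exp (-(v ^ 2 / 2) + m * |v|) := by rw [Real.exp_add]; ring
      _ ≤ C * Real.exp (m ^ 2 + -(1 / 4) * v ^ 2) := by
          refine mul_le_mul_of_nonneg_left (Real.exp_le_exp.2 ?_) hC
          have : |v| ^ 2 = v ^ 2 := sq_abs v
          nlinarith [sq_nonneg (m - |v| / 2)]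
      _ = _ := by rw [Real.exp_add]; ring
  · exact (integrable_exp_neg_mul_sq (by norm_num)).const_mul _
  · refine Eventually.of_forall fun v => ?_
    exact ((Real.continuous_exp.tendsto _).comp (phase_tendsto hc v).neg).mul (hlim v)

lemma rpow_exp_bdd (p b : ℝ) (hp : 0 < p) :
    ∃ C : ℝ, 0 ≤ C ∧ ∀ y : ℝ, 0 < y → y < 1 → y ^ b * Real.exp (-p / y) ≤ C := by
  obtain ⟨n, hn⟩ := exists_nat_ge (-b)
  refine ⟨n.factorial / p ^ n, by positivity, fun y hy hy1 => ?_⟩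
  have h1 : y ^ b ≤ y⁻¹ ^ n := by
    rw [← Real.rpow_natCast, Real.inv_rpow hy.le, ← Real.rpow_neg hy.le]
    exact Real.rpow_le_rpow_of_exponent_ge hy hy1.le (by linarith)
  have h2 := Real.pow_div_factorial_le_exp (p / y) (by positivity) n
  have h3 : Real.exp (-p / y) * Real.exp (p / y) = 1 := by
    rw [← Real.exp_add]; simp [neg_div]
  have hE := Real.exp_pos (-p / y)
  calc y ^ b * Real.exp (-p / y) ≤ y⁻¹ ^ n * Real.exp (-p / y) := by gcongr
    _ = n.factorial / p ^ n * ((p / y) ^ n / n.factorial * Real.exp (-p / y)) := by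
        have : (n.factorial : ℝ) ≠ 0 := by positivity
        rw [div_pow, inv_pow]; field_simp
    _ ≤ n.factorial / p ^ n * (Real.exp (p / y) * Real.exp (-p / y)) := by gcongr
    _ = _ := by rw [mul_comm (Real.exp (p / y)), h3, mul_one]

/-- cut-off weight -/
noncomputable def gcut (p b t : ℝ) : ℝ :=
  (Ioo (0 : ℝ) 1).indicator (fun t => (1 - t) ^ b * Real.exp (-p / (1 - t))) t

lemma gcut_meas (p b : ℝ) : Measurable (gcut p b) := by
  unfold gcut
  refine Measurable.indicator ?_ measurableSet_Ioo
  fun_prop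

lemma gcut_bdd (p b : ℝ) (hp : 0 < p) : ∃ C : ℝ, 0 ≤ C ∧ ∀ t, |gcut p b t| ≤ C := by
  obtain ⟨C, hC, h⟩ := rpow_exp_bdd p b hp
  refine ⟨C, hC, fun t => ?_⟩
  unfold gcut
  by_cases ht : t ∈ Ioo (0 : ℝ) 1
  · rw [indicator_of_mem ht]
    have h1 : 0 < 1 - t := by linarith [ht.2]
    rw [abs_of_nonneg (by positivity)]
    exact h _ h1 (by linarith [ht.1])
  · rw [indicator_of_notMem ht]; simpa using hC

lemma gcut_lim (p b : ℝ) : Tendsto (gcut p b) (nhdsWithin 0 (Ioi 0)) (nhds (Real.exp (-p))) := by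
  have hcont : ContinuousAt (fun t : ℝ => (1 - t) ^ b * Real.exp (-p / (1 - t))) 0 := by
    refine ContinuousAt.mul ?_ ?_
    · exact ContinuousAt.rpow_const (by fun_prop) (by simp)
    · refine Real.continuous_exp.continuousAt.comp ?_
      exact ContinuousAt.div (by fun_prop) (by fun_prop) (by simp)
  have h := hcont.tendsto.mono_left (nhdsWithin_le_nhds (s := Ioi 0))
  simp only [sub_zero, Real.one_rpow, div_one, one_mul] at h
  refine h.congr' ?_
  filter_upwards [Ioo_mem_nhdsGT (show (0 : ℝ) < 1 by norm_num)] with t ht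
  unfold gcut
  rw [indicator_of_mem ht]

lemma subst_exp (f : ℝ → ℝ) {s c : ℝ} (hs : 0 < s) (hc : 0 < c) :
    ∫ t in Ioi (0 : ℝ), f t
      = ∫ v : ℝ, (s * Real.exp (v / c) / c) * f (s * Real.exp (v / c)) := by
  have himg : (fun v : ℝ => s * Real.exp (v / c)) '' univ = Ioi 0 := by
    ext t
    simp only [image_univ, mem_range, mem_Ioi]
    constructor
    · rintro ⟨v, rfl⟩; positivity
    · intro ht
      refine ⟨c * Real.log (t / s), ?_⟩
      rw [mul_div_cancel_left₀ _ hc.ne', Real.exp_log (by positivity)]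
      field_simp
  rw [← himg, integral_image_eq_integral_abs_deriv_smul
    (f' := fun v => s * Real.exp (v / c) / c) MeasurableSet.univ]
  · simp only [Measure.restrict_univ, smul_eq_mul]
    congr 1; ext v
    rw [abs_of_pos (by positivity)]
  · intro v _
    have := (((hasDerivAt_id v).div_const c).exp.const_mul s).hasDerivWithinAt (s := univ)
    refine this.congr_deriv ?_
    simp only [id, one_div]
    ring
  · intro u _ v _ h
    have h1 := mul_left_cancel₀ hs.ne' h
    have h2 := Real.exp_injective h1
    field_simp at h2
    exact h2

lemma J_eq (p a b x : ℝ) {c s : ℝ} (hc : 0 < c) (hs : 0 < s)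
    (hxs : x * s = c ^ 2 / 2) (hps : p / s = c ^ 2 / 2) :
    (∫ t in Ioo (0 : ℝ) 1, t ^ a * (1 - t) ^ b
          * Real.exp (-x * t) * Real.exp (-p / (t * (1 - t))))
    = s ^ (a + 1) / c * Real.exp (-c ^ 2) *
      ∫ v : ℝ, Real.exp (-(c ^ 2 * (Real.cosh (v / c) - 1))) *
        (Real.exp ((a + 1) * (v / c)) * gcut p b (s * Real.exp (v / c))) := by
  have h1 : (∫ t in Ioo (0 : ℝ) 1, t ^ a * (1 - t) ^ b
          * Real.exp (-x * t) * Real.exp (-p / (t * (1 - t))))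
      = ∫ t in Ioi (0 : ℝ), t ^ a * Real.exp (-(x * t + p / t)) * gcut p b t := by
    rw [← integral_indicator measurableSet_Ioo, ← integral_indicator measurableSet_Ioi]
    congr 1; ext t
    by_cases ht : t ∈ Ioo (0 : ℝ) 1
    · have ht' : t ∈ Ioi (0 : ℝ) := ht.1
      rw [indicator_of_mem ht, indicator_of_mem ht', gcut, indicator_of_mem ht]
      have h0 : t ≠ 0 := ht.1.ne'
      have h1 : 1 - t ≠ 0 := by have := ht.2; intro h; linarith
      have : -p / (t * (1 - t)) = -(p / t) + -p / (1 - t) := by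
        field_simp; ring
      rw [this, neg_add, Real.exp_add, Real.exp_add]
      rw [neg_mul]; ring
    · rw [indicator_of_notMem ht]
      symm
      apply indicator_apply_eq_zero.2
      intro _
      rw [gcut, indicator_of_notMem ht, mul_zero]
  rw [h1, subst_exp _ hs hc, ← integral_const_mul]
  congr 1; ext v
  set y := v / c
  have e1 : x * (s * Real.exp y) + p / (s * Real.exp y) = c ^ 2 * Real.cosh y := by
    rw [← mul_assoc, hxs, ← div_div, hps, Real.cosh_eq, Real.exp_neg]
    field_simp
  have e2 : s * Real.exp y * (s * Real.exp y) ^ a = s ^ (a + 1) * Real.exp ((a + 1) * y) := by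
    rw [Real.mul_rpow hs.le (Real.exp_pos _).le, ← Real.exp_mul, Real.rpow_add_one hs.ne',
      show (a + 1) * y = y * a + y by ring, Real.exp_add]
    ring
  have e3 : Real.exp (-(c ^ 2 * Real.cosh y))
      = Real.exp (-c ^ 2) * Real.exp (-(c ^ 2 * (Real.cosh y - 1))) := by
    rw [← Real.exp_add]; congr 1; ring
  rw [e1, e3]
  linear_combination (Real.exp (-c ^ 2) * Real.exp (-(c ^ 2 * (Real.cosh y - 1))) *
    gcut p b (s * Real.exp y) / c) * e2

lemma K_eq (μ : ℝ) {c : ℝ} (hc : 0 < c) :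
    2 * besselK μ (c ^ 2) = Real.exp (-c ^ 2) / c *
      ∫ v : ℝ, Real.exp (-(c ^ 2 * (Real.cosh (v / c) - 1))) * Real.cosh (μ * (v / c)) := by
  unfold besselK
  rw [← integral_comp_abs (f := fun u => Real.exp (-c ^ 2 * Real.cosh u) * Real.cosh (μ * u))]
  have h := Measure.integral_comp_div
    (fun u : ℝ => Real.exp (-(c ^ 2 * (Real.cosh u - 1))) * Real.cosh (μ * u)) c
  rw [h, abs_of_pos hc, smul_eq_mul, ← mul_assoc, div_mul_cancel₀ _ hc.ne', ← integral_const_mul]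
  congr 1; ext u
  have : Real.cosh (μ * |u|) = Real.cosh (μ * u) := by
    rw [← Real.cosh_abs, abs_mul, abs_abs, ← abs_mul, Real.cosh_abs]
  rw [Real.cosh_abs, this, ← mul_assoc, ← Real.exp_add]
  congr 2; ring

/-- Leading asymptotics, as `x → +∞`, of
`J(a,b;-x) = ∫₀^1 t^a (1-t)^b e^{-xt} exp(-p/(t(1-t))) dt`:
`J(a,b;-x) ~ √π p^{a/2+1/4} x^{-a/2-3/4} exp(-p - 2√(px))`, or equivalently
`J(a,b;-x) ~ 2 e^{-p} (p/x)^{(a+1)/2} K_{a+1}(2√(px))`. -/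
theorem extended_confluent_asymptotics (p : ℝ) (hp : 0 < p) (a b : ℝ) :
    Tendsto (fun x : ℝ =>
      (∫ t in Ioo (0 : ℝ) 1, t ^ a * (1 - t) ^ b
          * Real.exp (-x * t) * Real.exp (-p / (t * (1 - t))))
        / (Real.sqrt Real.pi * p ^ (a / 2 + 1/4) * x ^ (-a / 2 - 3/4)
            * Real.exp (-p - 2 * Real.sqrt (p * x))))
      atTop (nhds 1) ∧
    Tendsto (fun x : ℝ =>
      (∫ t in Ioo (0 : ℝ) 1, t ^ a * (1 - t) ^ b
          * Real.exp (-x * t) * Real.exp (-p / (t * (1 - t))))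
        / (2 * Real.exp (-p) * (p / x) ^ ((a + 1) / 2)
            * besselK (a + 1) (2 * Real.sqrt (p * x))))
      atTop (nhds 1) := by
  set c : ℝ → ℝ := fun x => Real.sqrt (2 * Real.sqrt (p * x)) with hcdef
  set s : ℝ → ℝ := fun x => Real.sqrt (p / x) with hsdef
  have hc : Tendsto c atTop atTop :=
    Real.tendsto_sqrt_atTop.comp ((Real.tendsto_sqrt_atTop.comp
      (tendsto_id.const_mul_atTop hp)).const_mul_atTop (by norm_num))
  have hs : Tendsto s atTop (nhds 0) := by
    have h1 : Tendsto (fun x : ℝ => p / x) atTop (nhds 0) := tendsto_id.const_div_atTop p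
    have := (Real.continuous_sqrt.tendsto 0).comp h1
    rwa [Real.sqrt_zero] at this
  have hcsq : ∀ x, c x ^ 2 = 2 * Real.sqrt (p * x) := fun x => Real.sq_sqrt (by positivity)
  have hcpos : ∀ x, 0 < x → 0 < c x := fun x hx => by simp only [hcdef]; positivity
  have hspos : ∀ x, 0 < x → 0 < s x := fun x hx => by simp only [hsdef]; positivity
  have hycl : ∀ v : ℝ, Tendsto (fun x => v / c x) atTop (nhds 0) :=
    fun v => hc.const_div_atTop v
  have hyabs : ∀ x, 1 ≤ c x → ∀ v, |v / c x| ≤ |v| := fun x hx v => by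
    rw [abs_div, abs_of_pos (by linarith : 0 < c x)]
    exact div_le_self (abs_nonneg _) hx
  obtain ⟨C, hC, hgb⟩ := gcut_bdd p b hp
  set IJ : ℝ → ℝ := fun x => ∫ v : ℝ, Real.exp (-((c x) ^ 2 * (Real.cosh (v / c x) - 1))) *
        (Real.exp ((a + 1) * (v / c x)) * gcut p b (s x * Real.exp (v / c x))) with hIJ
  set IK : ℝ → ℝ := fun x => ∫ v : ℝ, Real.exp (-((c x) ^ 2 * (Real.cosh (v / c x) - 1))) *
        Real.cosh ((a + 1) * (v / c x)) with hIK
  have hprod : ∀ x, 1 ≤ c x → ∀ v, |(a + 1) * (v / c x)| ≤ |a + 1| * |v| := fun x hx v => by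
    rw [abs_mul]
    exact mul_le_mul_of_nonneg_left (hyabs x hx v) (abs_nonneg _)
  have limJ : Tendsto IJ atTop (nhds (Real.sqrt (2 * Real.pi) * Real.exp (-p))) := by
    refine laplace_lemma hc _ C |a + 1| _ hC ?_ ?_ ?_
    · intro x
      have := gcut_meas p b
      fun_prop
    · filter_upwards [hc.eventually_ge_atTop 1] with x hx v
      rw [abs_mul, Real.abs_exp, mul_comm]
      exact mul_le_mul (hgb _) (Real.exp_le_exp.2 ((le_abs_self _).trans (hprod x hx v)))
        (Real.exp_pos _).le hC
    · intro v
      have hexp : ∀ k : ℝ, Tendsto (fun x => Real.exp (k * (v / c x))) atTop (nhds 1) := by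
        intro k
        have := (Real.continuous_exp.tendsto _).comp ((hycl v).const_mul k)
        simpa [Function.comp_def] using this
      have h1 : Tendsto (fun x => s x * Real.exp (v / c x)) atTop (nhdsWithin 0 (Ioi 0)) := by
        refine tendsto_nhdsWithin_iff.2 ⟨?_, ?_⟩
        · have := hs.mul (hexp 1)
          simpa using this
        · filter_upwards [eventually_gt_atTop 0] with x hx
          exact mul_pos (hspos x hx) (Real.exp_pos _)
      have := (hexp (a + 1)).mul ((gcut_lim p b).comp h1)
      simpa using this
  have limK : Tendsto IK atTop (nhds (Real.sqrt (2 * Real.pi))) := by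
    rw [← mul_one (Real.sqrt (2 * Real.pi))]
    refine laplace_lemma hc _ 1 |a + 1| _ zero_le_one ?_ ?_ ?_
    · intro x
      exact Real.measurable_cosh.comp (by fun_prop)
    · filter_upwards [hc.eventually_ge_atTop 1] with x hx v
      rw [abs_of_pos (Real.cosh_pos _), one_mul, ← Real.cosh_abs]
      calc Real.cosh |(a + 1) * (v / c x)| ≤ Real.exp |(a + 1) * (v / c x)| := by
            rw [Real.cosh_eq]
            have : Real.exp (-|(a + 1) * (v / c x)|) ≤ Real.exp |(a + 1) * (v / c x)| :=
              Real.exp_le_exp.2 (by linarith [abs_nonneg ((a + 1) * (v / c x))])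
            linarith
        _ ≤ _ := Real.exp_le_exp.2 (hprod x hx v)
    · intro v
      have := (Real.continuous_cosh.tendsto _).comp ((hycl v).const_mul (a + 1))
      simpa [Function.comp_def] using this
  have hJ : ∀ x, 0 < x → (∫ t in Ioo (0 : ℝ) 1, t ^ a * (1 - t) ^ b
          * Real.exp (-x * t) * Real.exp (-p / (t * (1 - t))))
      = s x ^ (a + 1) / c x * Real.exp (-(c x) ^ 2) * IJ x := by
    intro x hx
    have hsx : Real.sqrt x ^ 2 = x := Real.sq_sqrt hx.le
    have hsp : Real.sqrt p ^ 2 = p := Real.sq_sqrt hp.le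
    have hx0 : 0 < Real.sqrt x := Real.sqrt_pos.2 hx
    have hp0 : 0 < Real.sqrt p := Real.sqrt_pos.2 hp
    refine J_eq p a b x (hcpos x hx) (hspos x hx) ?_ ?_
    · rw [hcsq]
      simp only [hsdef]
      rw [Real.sqrt_div hp.le, Real.sqrt_mul hp.le]
      field_simp
      rw [hsx]
    · rw [hcsq]
      simp only [hsdef]
      rw [Real.sqrt_div hp.le, Real.sqrt_mul hp.le]
      field_simp
      rw [hsp]
  have hpi : 0 < Real.sqrt (2 * Real.pi) := by positivity
  have hE := Real.exp_pos (-p)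
  constructor
  · have := limJ.div_const (Real.sqrt (2 * Real.pi) * Real.exp (-p))
    rw [div_self (by positivity)] at this
    refine this.congr' ?_
    filter_upwards [eventually_gt_atTop 0] with x hx
    rw [hJ x hx, hcsq]
    have hcx : c x = Real.sqrt 2 * (p ^ (1 / 4 : ℝ) * x ^ (1 / 4 : ℝ)) := by
      simp only [hcdef]
      rw [Real.sqrt_mul (by norm_num), Real.sqrt_eq_rpow (Real.sqrt _), Real.sqrt_eq_rpow (p * x),
        ← Real.rpow_mul (by positivity), Real.mul_rpow hp.le hx.le]
      norm_num
    have hsx : s x ^ (a + 1) = p ^ ((a + 1) / 2) * x ^ (-((a + 1) / 2)) := by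
      simp only [hsdef]
      rw [Real.sqrt_eq_rpow, ← Real.rpow_mul (by positivity), Real.div_rpow hp.le hx.le,
        Real.rpow_neg hx.le, show 1 / 2 * (a + 1) = (a + 1) / 2 by ring]
      rfl
    have hP : p ^ ((a + 1) / 2) = p ^ (a / 2 + 1 / 4) * p ^ (1 / 4 : ℝ) := by
      rw [← Real.rpow_add hp]; congr 1; ring
    have hX : x ^ (-((a + 1) / 2)) = x ^ (-a / 2 - 3 / 4) * x ^ (1 / 4 : ℝ) := by
      rw [← Real.rpow_add hx]; congr 1; ring
    rw [hcx, hsx, hP, hX, Real.sqrt_mul (by norm_num : (0 : ℝ) ≤ 2), sub_eq_add_neg (-p), Real.exp_add]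
    have := Real.rpow_pos_of_pos hp (a / 2 + 1 / 4)
    have := Real.rpow_pos_of_pos hx (-a / 2 - 3 / 4)
    have := Real.rpow_pos_of_pos hp (1 / 4)
    have := Real.rpow_pos_of_pos hx (1 / 4)
    have := Real.exp_pos (-(2 * Real.sqrt (p * x)))
    have : 0 < Real.sqrt Real.pi := by positivity
    generalize IJ x = I
    generalize Real.exp (-(2 * Real.sqrt (p * x))) = E at *
    generalize x ^ (-a / 2 - 3 / 4) = X at *
    generalize p ^ (a / 2 + 1 / 4) = P at *
    field_simp
  · have := limJ.div (limK.const_mul (Real.exp (-p))) (by positivity)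
    rw [mul_comm (Real.exp (-p)), div_self (by positivity)] at this
    refine this.congr' ?_
    filter_upwards [eventually_gt_atTop 0] with x hx
    have hK := K_eq (a + 1) (hcpos x hx)
    change _ = _ * IK x at hK
    have hsx : (p / x) ^ ((a + 1) / 2) = s x ^ (a + 1) := by
      simp only [hsdef]
      rw [Real.sqrt_eq_rpow, ← Real.rpow_mul (by positivity)]
      congr 1; ring
    rw [hJ x hx, ← hcsq, hsx, show 2 * Real.exp (-p) * s x ^ (a + 1) * besselK (a + 1) (c x ^ 2)
      = Real.exp (-p) * s x ^ (a + 1) * (2 * besselK (a + 1) (c x ^ 2)) by ring, hK]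
    have h1 := Real.rpow_pos_of_pos (hspos x hx) (a + 1)
    have h2 := hcpos x hx
    have h3 := Real.exp_pos (-(c x) ^ 2)
    simp only [Pi.div_apply]
    rw [show s x ^ (a + 1) / c x * Real.exp (-(c x) ^ 2) * IJ x
        = (s x ^ (a + 1) / c x * Real.exp (-(c x) ^ 2)) * IJ x by ring,
      show Real.exp (-p) * s x ^ (a + 1) * (Real.exp (-(c x) ^ 2) / c x * IK x)
        = (s x ^ (a + 1) / c x * Real.exp (-(c x) ^ 2)) * (Real.exp (-p) * IK x) by ring,
      mul_div_mul_left _ _ (by positivity)]
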